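/- For every u ∈ V and every i ≥ 1, every entry of first_i(u) belongs to wreach_{2r}[max first_i(u)]. Consequently, for every v ∈ V, the number of distinct sequences of the form first_i(u), where u ranges over V and i over {1, …, wcol_r(G, ≤)}, whose ≤-greatest entry equals v is at most wcol_r(G, ≤) · 2^{wcol_{2r}(G, ≤)}. -/

import Mathlib

open SimpleGraph

variable {V : Type*}

/-- `u ∈ wreach G r v` iff `u` is weakly `r`-reachable from `v`:
there is a path of length at most `r` from `v` to `u` on which `u` is the `≤`-least vertex. -/
def wreach [LinearOrder V] (G : SimpleGraph V) (r : ℕ) (v : V) : Set V :=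
  {u | ∃ p : G.Walk v u, p.IsPath ∧ p.length ≤ r ∧ ∀ w ∈ p.support, u ≤ w}

/-- The weak `r`-coloring number of `(G, ≤)`: the maximum of `|wreach_r[v]|` over `v`. -/
noncomputable def wcol [LinearOrder V] (G : SimpleGraph V) (r : ℕ) : ℕ :=
  sSup (Set.range fun v => (wreach G r v).ncard)

/-- `firstSeq G r i v`: the sequence consisting of the `i` smallest elements of
`wreach G r v` in increasing order, padded at the end with `v` to have length exactly `i`. -/
noncomputable def firstSeq [Fintype V] [LinearOrder V] (G : SimpleGraph V) (r i : ℕ)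
    (v : V) : List V :=
  let l := ((Set.toFinite (wreach G r v)).toFinset.sort (· ≤ ·)).take i
  l ++ List.replicate (i - l.length) v

/-- The `≤`-greatest entry of a nonempty list (junk value on the empty list). -/
noncomputable def listMax [LinearOrder V] [Nonempty V] : List V → V
  | [] => Classical.arbitrary V
  | a :: as => as.foldr max a

/-!
Two vertices `v` and `w` weakly `r`-reachable from the same `u` are joined by a walk of length at
most `2 * r` through `u`, and if `w ≤ v` then `w` is still a lower bound of that walk. With `v` the
maximum of `first_i(u)` this is the first claim. For the counting, `first_i(u)` lists a set of
vertices in increasing order and is padded only when it already contains all of `wreach_r[u]`; its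
maximum is then `u`, because `u` is the greatest vertex weakly reachable from `u`. So the padding
always consists of copies of the maximum `v`, and the sequence is determined by its length `i`,
by `v`, and by its set of entries, a subset of `wreach_{2r}[v]`.
-/

section WeakReachability

variable [LinearOrder V] {G : SimpleGraph V} {r s : ℕ} {u v w : V}

theorem mem_wreach_of_walk (p : G.Walk v u) (hlength : p.length ≤ r)
    (hle : ∀ w ∈ p.support, u ≤ w) : u ∈ wreach G r v := by
  classical
  exact ⟨p.bypass, p.bypass_isPath, p.length_bypass_le_length.trans hlength,
    fun w hw => hle w (p.support_bypass_subset_support hw)⟩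

theorem self_mem_wreach (G : SimpleGraph V) (r : ℕ) (v : V) : v ∈ wreach G r v :=
  mem_wreach_of_walk Walk.nil (Nat.zero_le r) (by simp)

theorem isGreatest_wreach (G : SimpleGraph V) (r : ℕ) (v : V) : IsGreatest (wreach G r v) v :=
  ⟨self_mem_wreach G r v, fun _ ⟨p, _, _, hle⟩ => hle v p.start_mem_support⟩

theorem mem_wreach_add_of_le (hv : v ∈ wreach G r u) (hw : w ∈ wreach G s u) (hwv : w ≤ v) :
    w ∈ wreach G (r + s) v := by
  obtain ⟨p, -, hp_length, hp_le⟩ := hv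
  obtain ⟨q, -, hq_length, hq_le⟩ := hw
  refine mem_wreach_of_walk (p.reverse.append q) ?_ fun x hx => ?_
  · rw [Walk.length_append, Walk.length_reverse]
    exact Nat.add_le_add hp_length hq_length
  · rw [Walk.mem_support_append_iff, Walk.support_reverse, List.mem_reverse] at hx
    exact hx.elim (fun hxp => hwv.trans (hp_le x hxp)) (hq_le x)

theorem ncard_wreach_le_wcol [Finite V] (G : SimpleGraph V) (r : ℕ) (v : V) :
    (wreach G r v).ncard ≤ wcol G r :=
  le_csSup (Set.finite_range _).bddAbove ⟨v, rfl⟩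

end WeakReachability

section Lists

variable [LinearOrder V]

theorem listMax_eq_max [Nonempty V] {l : List V} (hl : l ≠ []) : listMax l = l.max hl := by
  cases l with
  | nil => contradiction
  | cons a l => exact List.foldl_eq_foldr.symm

theorem isGreatest_listMax [Nonempty V] {l : List V} (hl : l ≠ []) :
    IsGreatest {x | x ∈ l} (listMax l) := by
  rw [listMax_eq_max hl]
  exact ⟨List.max_mem hl, fun _ => List.le_max_of_mem⟩

theorem rightpad_of_le_length {α : Type*} {n : ℕ} {l : List α} (h : n ≤ l.length) (a : α) :
    l.rightpad n a = l := by
  rw [List.rightpad, Nat.sub_eq_zero_of_le h, List.replicate_zero, List.append_nil]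

theorem toFinset_rightpad_of_mem {α : Type*} [DecidableEq α] {a : α} {l : List α} (ha : a ∈ l)
    (n : ℕ) : (l.rightpad n a).toFinset = l.toFinset := by
  ext x
  simp only [List.rightpad, List.mem_toFinset, List.mem_append, List.mem_replicate]
  exact or_iff_left_of_imp fun hx => hx.2 ▸ ha

theorem toFinset_sort_take_sort (s : Finset V) (n : ℕ) :
    (s.sort.take n).toFinset.sort = s.sort.take n :=
  (List.toFinset_sort _ ((s.sort_nodup _).sublist (List.take_sublist _ _))).2
    ((s.pairwise_sort _).sublist (List.take_sublist _ _))

theorem rightpad_sort_toFinset_of_eq_rightpad_take_sort [Nonempty V] {s : Finset V} {a : V}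
    (ha : IsGreatest (s : Set V) a) {n : ℕ} {l : List V} (hl : l = (s.sort.take n).rightpad n a) :
    l.toFinset.sort.rightpad n (listMax l) = l := by
  subst hl
  rcases le_total n s.card with hn | hn
  · have hlength : n ≤ (s.sort.take n).length := by simp [hn]
    simp only [rightpad_of_le_length hlength, toFinset_sort_take_sort]
  · have htake : s.sort.take n = s.sort := List.take_of_length_le (by simpa using hn)
    have hset : (s.sort.rightpad n a).toFinset = s := by
      rw [toFinset_rightpad_of_mem ((s.mem_sort _).2 ha.1), s.sort_toFinset]
    have hmem (x : V) : x ∈ s.sort.rightpad n a ↔ x ∈ s := by rw [← List.mem_toFinset, hset]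
    have hmax : listMax (s.sort.rightpad n a) = a := by
      have h := isGreatest_listMax (List.ne_nil_of_mem ((hmem a).2 ha.1))
      simp only [hmem] at h
      exact h.unique ha
    rw [htake, hset, hmax]

end Lists

section FirstSeq

variable [Fintype V] [LinearOrder V] {G : SimpleGraph V} {r i : ℕ} {u w : V}

theorem mem_wreach_of_mem_firstSeq (hw : w ∈ firstSeq G r i u) : w ∈ wreach G r u := by
  rcases List.mem_append.1 hw with htake | hpad
  · simpa using List.mem_of_mem_take htake
  · exact List.eq_of_mem_replicate hpad ▸ self_mem_wreach G r u

theorem mem_wreach_listMax_of_mem_firstSeq [Nonempty V] (hw : w ∈ firstSeq G r i u) :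
    w ∈ wreach G (2 * r) (listMax (firstSeq G r i u)) := by
  have hmax := isGreatest_listMax (List.ne_nil_of_mem hw)
  rw [two_mul]
  exact mem_wreach_add_of_le (mem_wreach_of_mem_firstSeq hmax.1) (mem_wreach_of_mem_firstSeq hw)
    (hmax.2 hw)

theorem rightpad_sort_toFinset_firstSeq [Nonempty V] (G : SimpleGraph V) (r i : ℕ) (u : V) :
    (firstSeq G r i u).toFinset.sort.rightpad i (listMax (firstSeq G r i u)) =
      firstSeq G r i u :=
  rightpad_sort_toFinset_of_eq_rightpad_take_sort
    (by simpa only [Set.Finite.coe_toFinset] using isGreatest_wreach G r u) rfl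

theorem ncard_firstSeq_listMax_eq_le [Nonempty V] (G : SimpleGraph V) (r k : ℕ) (v : V) :
    {l : List V | ∃ u : V, ∃ i : ℕ, 1 ≤ i ∧ i ≤ k ∧
        l = firstSeq G r i u ∧ listMax l = v}.ncard ≤
      k * 2 ^ (wreach G (2 * r) v).ncard := by
  let R : Finset V := (Set.toFinite (wreach G (2 * r) v)).toFinset
  let candidates : Finset (List V) :=
    Finset.image₂ (fun i s => s.sort.rightpad i v) (Finset.Icc 1 k) R.powerset
  calc
    _ ≤ (candidates : Set (List V)).ncard := by
      refine Set.ncard_le_ncard ?_ candidates.finite_toSet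
      rintro _ ⟨u, i, hi, hik, rfl, rfl⟩
      refine Finset.mem_image₂.2 ⟨i, Finset.mem_Icc.2 ⟨hi, hik⟩, (firstSeq G r i u).toFinset,
        Finset.mem_powerset.2 fun w hw => ?_, rightpad_sort_toFinset_firstSeq G r i u⟩
      exact (Set.Finite.mem_toFinset _).2
        (mem_wreach_listMax_of_mem_firstSeq (List.mem_toFinset.1 hw))
    _ ≤ (Finset.Icc 1 k).card * R.powerset.card := by
      rw [Set.ncard_coe_finset]
      exact Finset.card_image₂_le _ _ _
    _ = k * 2 ^ (wreach G (2 * r) v).ncard := by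
      rw [Nat.card_Icc, Nat.add_sub_cancel, Finset.card_powerset, ← Set.ncard_eq_toFinset_card]

end FirstSeq

theorem statement3 [Fintype V] [LinearOrder V] [Nonempty V] (G : SimpleGraph V) (r : ℕ) :
    (∀ u : V, ∀ i : ℕ, 1 ≤ i → ∀ w ∈ firstSeq G r i u,
      w ∈ wreach G (2 * r) (listMax (firstSeq G r i u))) ∧
    (∀ v : V,
      {l : List V | ∃ u : V, ∃ i : ℕ, 1 ≤ i ∧ i ≤ wcol G r ∧
        l = firstSeq G r i u ∧ listMax l = v}.ncard ≤
      wcol G r * 2 ^ wcol G (2 * r)) := by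
  refine ⟨fun u i _ w hw => mem_wreach_listMax_of_mem_firstSeq hw, fun v => ?_⟩
  calc
    _ ≤ wcol G r * 2 ^ (wreach G (2 * r) v).ncard :=
      ncard_firstSeq_listMax_eq_le G r (wcol G r) v
    _ ≤ wcol G r * 2 ^ wcol G (2 * r) := by
      gcongr
      · exact one_le_two
      · exact ncard_wreach_le_wcol G (2 * r) v
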